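/- arXiv:0805.3259 — 7 statements merged into one kernel-verified Lean document; each statement's English description precedes it below -/
import Mathlib

section
/- Let A = (λ_1, …, λ_n) be a non pyramidal regular configuration in ℤ^d of rank d, and let B be a Gale dual of A with rows b_1, …, b_n (which are all nonzero since A is non pyramidal). Then for any indices i, j, the indices i and j are coparallel if and only if b_i and b_j are parallel, i.e. b_i = α·b_j for some nonzero α ∈ ℚ. -/
/-!
Localization is exact, so the columns of `B` also span the kernel of `A` over the fraction field:
its vectors are the `B c`, with `i`-th coordinate `⟨b_i, c⟩`. Hence `i` and `j` are coparallel
exactly when the functionals `⟨b_i, ·⟩` and `⟨b_j, ·⟩` have the same kernel, that is, when they are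
nonzero multiples of each other.
-/

open scoped Matrix

section Proportionality

variable {K : Type*} [Field K]

theorem ker_eq_ker_iff_exists_ne_zero_eq_smul {V : Type*} [AddCommGroup V] [Module K V]
    {f g : Module.Dual K V} :
    LinearMap.ker f = LinearMap.ker g ↔ ∃ α : K, α ≠ 0 ∧ f = α • g := by
  refine ⟨fun h => ?_, fun ⟨α, hα, hfg⟩ => hfg ▸ LinearMap.ker_smul g α hα⟩
  have hspan : f ∈ Submodule.span K (Set.range fun _ : Unit => g) :=
    mem_span_of_iInf_ker_le_ker (by simp [h])
  obtain ⟨α, rfl⟩ : ∃ α : K, α • g = f := by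
    simpa only [Set.range_const, Submodule.mem_span_singleton] using hspan
  obtain rfl | hα := eq_or_ne α 0
  · have hg : g = 0 := LinearMap.ker_eq_top.mp (by simpa using h.symm)
    exact ⟨1, one_ne_zero, by simp [hg]⟩
  · exact ⟨α, hα, rfl⟩

theorem forall_dotProduct_eq_zero_iff_iff_exists_ne_zero_eq_smul {p : Type*} [Fintype p]
    {x y : p → K} :
    (∀ c, x ⬝ᵥ c = 0 ↔ y ⬝ᵥ c = 0) ↔ ∃ α : K, α ≠ 0 ∧ x = α • y := by
  classical
  have hker := ker_eq_ker_iff_exists_ne_zero_eq_smul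
    (f := dotProductEquiv K p x) (g := dotProductEquiv K p y)
  simpa only [SetLike.ext_iff, LinearMap.mem_ker, dotProductEquiv_apply_apply, ← map_smul,
    EmbeddingLike.apply_eq_iff_eq] using hker

end Proportionality

section Localization

variable {R : Type*} [CommRing R] {L : Type*} [CommRing L] [Algebra R L]
  {m n p : Type*} [Finite m] [Fintype n] [Fintype p]

theorem coe_isLocalizedModule_map_mulVecLin (S : Submonoid R) [IsLocalization S L]
    (A : Matrix m n R) :
    ⇑(IsLocalizedModule.map S
      (LinearMap.pi fun i : n => Algebra.linearMap R L ∘ₗ LinearMap.proj i)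
      (LinearMap.pi fun i : m => Algebra.linearMap R L ∘ₗ LinearMap.proj i) A.mulVecLin) =
      (A.map (algebraMap R L)).mulVec := by
  set ιn := LinearMap.pi fun i : n => Algebra.linearMap R L ∘ₗ LinearMap.proj i
  set ιm := LinearMap.pi fun i : m => Algebra.linearMap R L ∘ₗ LinearMap.proj i
  suffices IsLocalizedModule.map S ιn ιm A.mulVecLin =
      (A.map (algebraMap R L)).mulVecLin.restrictScalars R from congrArg DFunLike.coe this
  refine IsLocalizedModule.linearMap_ext S ιn ιm ?_
  rw [IsLocalizedModule.map_comp]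
  refine LinearMap.ext fun v => funext fun i => ?_
  exact RingHom.map_mulVec (algebraMap R L) A v i

theorem exact_mulVec_map_algebraMap (S : Submonoid R) [IsLocalization S L]
    {B : Matrix n p R} {A : Matrix m n R} (hexact : Function.Exact B.mulVec A.mulVec) :
    Function.Exact (B.map (algebraMap R L)).mulVec (A.map (algebraMap R L)).mulVec := by
  rw [← coe_isLocalizedModule_map_mulVecLin S, ← coe_isLocalizedModule_map_mulVecLin S]
  exact IsLocalizedModule.map_exact S _ _ _ B.mulVecLin A.mulVecLin hexact

end Localization

/-- Coparallelism of two columns of `A`, encoded through the supports of all vectors in the kernel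
of `A` rather than through circuits. -/
def Coparallel {K m n : Type*} [Field K] [Fintype n] (A : Matrix m n K) (i j : n) : Prop :=
  ∀ v, A *ᵥ v = 0 → (v i ≠ 0 ↔ v j ≠ 0)

theorem coparallel_iff_exists_ne_zero_row_eq_smul {K m n p : Type*} [Field K] [Fintype n]
    [Fintype p] {B : Matrix n p K} {A : Matrix m n K} (hexact : Function.Exact B.mulVec A.mulVec)
    (i j : n) : Coparallel A i j ↔ ∃ α : K, α ≠ 0 ∧ B.row i = α • B.row j :=
  calc Coparallel A i j
    _ ↔ ∀ c, (B *ᵥ c) i ≠ 0 ↔ (B *ᵥ c) j ≠ 0 := by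
      simp only [Coparallel, hexact _, Set.forall_mem_range]
    _ ↔ ∀ c, B.row i ⬝ᵥ c = 0 ↔ B.row j ⬝ᵥ c = 0 := forall_congr' fun _ => not_iff_not
    _ ↔ ∃ α : K, α ≠ 0 ∧ B.row i = α • B.row j :=
      forall_dotProduct_eq_zero_iff_iff_exists_ne_zero_eq_smul

theorem stmt1_general {R K m n p : Type*} [CommRing R] [Field K] [Algebra R K] [IsFractionRing R K]
    [Finite m] [Fintype n] [Fintype p] {A : Matrix m n R} {B : Matrix n p R}
    (hexact : Function.Exact B.mulVec A.mulVec) (i j : n) :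
    Coparallel (A.map (algebraMap R K)) i j ↔
      ∃ α : K, α ≠ 0 ∧ ∀ t, algebraMap R K (B i t) = α * algebraMap R K (B j t) := by
  have hexactK : Function.Exact (B.map (algebraMap R K)).mulVec (A.map (algebraMap R K)).mulVec :=
    exact_mulVec_map_algebraMap (nonZeroDivisors R) hexact
  simpa only [funext_iff, Matrix.row_apply, Matrix.map_apply, Pi.smul_apply, smul_eq_mul] using
    coparallel_iff_exists_ne_zero_row_eq_smul hexactK i j

/-- for a non pyramidal regular configuration with Gale dual `B`,
indices `i, j` are coparallel iff the Gale rows `b_i, b_j` are parallel. -/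
theorem stmt1 (d n : ℕ) (hd : 0 < d) (A : Matrix (Fin d) (Fin n) ℤ)
    (hreg : ∀ i : Fin n, A ⟨0, hd⟩ i = 1)
    (hrank : (A.map (Int.cast : ℤ → ℚ)).rank = d)
    (hnp : ¬ ∃ (i₀ : Fin n) (l : Fin d → ℚ),
        (∀ i : Fin n, i ≠ i₀ → ∑ r, l r * (A r i : ℚ) = 0) ∧
        ∑ r, l r * (A r i₀ : ℚ) = 1)
    (B : Matrix (Fin n) (Fin (n - d)) ℤ)
    (hBind : ∀ c : Fin (n - d) → ℤ, B.mulVec c = 0 → c = 0)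
    (hBspan : ∀ v : Fin n → ℤ, A.mulVec v = 0 ↔ ∃ c : Fin (n - d) → ℤ, v = B.mulVec c)
    (i j : Fin n) :
    (∀ v : Fin n → ℚ, (A.map (Int.cast : ℤ → ℚ)).mulVec v = 0 → (v i ≠ 0 ↔ v j ≠ 0)) ↔
      ∃ α : ℚ, α ≠ 0 ∧ ∀ t : Fin (n - d), (B i t : ℚ) = α * (B j t : ℚ) := by
  have hexact : Function.Exact B.mulVec A.mulVec := by simpa [Function.Exact, eq_comm] using hBspan
  exact stmt1_general hexact i j
end

section
/- Let A = (λ_1, …, λ_n) be a regular configuration in ℤ^d of rank d, and let B be a Gale dual of A with rows b_1, …, b_n. A subset S ⊆ {1, …, n} is a face complement if and only if there exist positive rational numbers r_i (i ∈ S) such that Σ_{i∈S} r_i·b_i = 0. -/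
/-!
If `B` is a Gale dual of `A`, the sequence `ℤ^(n-d) → ℤ^n → ℤ^d` given by `B` and then `A` is
exact in the middle. Exactness survives the flat base change to `ℚ` and then dualization, so
a vector `w ∈ ℚ^n` has the form `l ᵥ* A` if and only if `w ᵥ* B = 0`. A face complement `S` is the
support of such a vector that is positive on `S`; its restriction to `S` gives the coefficients of
the relation between the rows of `B`, and extending the coefficients by zero gives the vector back.
-/

open Function Matrix

section Exactness

theorem exact_dualMap_of_exact {K U V W : Type*} [Field K] [AddCommGroup U] [Module K U]
    [AddCommGroup V] [Module K V] [AddCommGroup W] [Module K W] {f : U →ₗ[K] V} {g : V →ₗ[K] W}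
    (h : Exact f g) : Exact g.dualMap f.dualMap := by
  rw [LinearMap.exact_iff, LinearMap.ker_dualMap_eq_dualAnnihilator_range,
    LinearMap.range_dualMap_eq_dualAnnihilator_ker, h.linearMap_ker_eq]

variable {m n k : Type*} [Fintype m] [Fintype n] [Fintype k]

theorem dotProductEquiv_comp_vecMulLinear {R : Type*} [CommSemiring R] [DecidableEq m]
    [DecidableEq n] (A : Matrix m n R) :
    (dotProductEquiv R n).toLinearMap ∘ₗ A.vecMulLinear =
      A.mulVecLin.dualMap ∘ₗ (dotProductEquiv R m).toLinearMap := by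
  refine LinearMap.ext fun l ↦ LinearMap.ext fun v ↦ ?_
  exact (dotProduct_mulVec l A v).symm

theorem exact_vecMulLinear_of_exact_mulVecLin {K : Type*} [Field K] {A : Matrix m n K}
    {B : Matrix n k K} (h : Exact B.mulVecLin A.mulVecLin) :
    Exact A.vecMulLinear B.vecMulLinear := by
  classical
  exact (Exact.iff_of_ladder_linearEquiv (dotProductEquiv_comp_vecMulLinear A).symm
    (dotProductEquiv_comp_vecMulLinear B).symm).1 (exact_dualMap_of_exact h)

theorem mulVecLin_map_algebraMap_comp_piScalarRight {R : Type*} (T : Type*) [CommSemiring R]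
    [CommSemiring T] [Algebra R T] [DecidableEq m] [DecidableEq n] (A : Matrix m n R) :
    (A.map (algebraMap R T)).mulVecLin.restrictScalars R ∘ₗ
        (TensorProduct.piScalarRight R R T n).toLinearMap =
      (TensorProduct.piScalarRight R R T m).toLinearMap ∘ₗ A.mulVecLin.lTensor T := by
  ext t j i
  simp [Algebra.smul_def, mulVec, dotProduct, Pi.single_apply]

theorem exact_mulVecLin_map_algebraMap {R p : Type*} (T : Type*) [CommRing R] [CommRing T]
    [Algebra R T] [Module.Flat R T] [Finite p] {A : Matrix p n R} {B : Matrix n k R}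
    (h : Exact B.mulVecLin A.mulVecLin) :
    Exact (B.map (algebraMap R T)).mulVecLin (A.map (algebraMap R T)).mulVecLin := by
  classical
  have := Fintype.ofFinite p
  exact (Exact.iff_of_ladder_linearEquiv (mulVecLin_map_algebraMap_comp_piScalarRight T B)
    (mulVecLin_map_algebraMap_comp_piScalarRight T A)).2 (Module.Flat.lTensor_exact T h)

end Exactness

theorem indicator_vecMul_apply {R n k : Type*} [NonUnitalNonAssocSemiring R] [Fintype n]
    (S : Finset n) (c : n → R) (B : Matrix n k R) (t : k) :
    ((S : Set n).indicator c ᵥ* B) t = ∑ i ∈ S, c i * B i t := by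
  classical
  simp [vecMul, dotProduct, Set.indicator_apply, ite_mul, Finset.sum_ite_mem]

theorem stmt2_general {R K m n k : Type*} [CommRing R] [Field K] [LT K] [Algebra R K]
    [Module.Flat R K] [Fintype m] [Fintype n] [Fintype k] {A : Matrix m n R} {B : Matrix n k R}
    (hAB : Exact B.mulVecLin A.mulVecLin) (S : Finset n) :
    (∃ l : m → K, (∀ i ∉ S, ∑ r, l r * algebraMap R K (A r i) = 0) ∧
        ∀ i ∈ S, 0 < ∑ r, l r * algebraMap R K (A r i)) ↔
      ∃ c : n → K, (∀ i ∈ S, 0 < c i) ∧ ∀ t, ∑ i ∈ S, c i * algebraMap R K (B i t) = 0 := by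
  have hexact := exact_vecMulLinear_of_exact_mulVecLin (exact_mulVecLin_map_algebraMap K hAB)
  constructor
  · rintro ⟨l, hzero, hpos⟩
    set w := l ᵥ* A.map (algebraMap R K)
    have hw : (S : Set n).indicator w = w :=
      Set.indicator_eq_self.2 fun i hi ↦ by_contra fun hiS ↦ hi (hzero i hiS)
    refine ⟨w, hpos, fun t ↦ ?_⟩
    calc ∑ i ∈ S, w i * algebraMap R K (B i t)
        = ((S : Set n).indicator w ᵥ* B.map (algebraMap R K)) t := by simp [indicator_vecMul_apply]
      _ = (w ᵥ* B.map (algebraMap R K)) t := by rw [hw]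
      _ = 0 := congrFun (hexact.apply_apply_eq_zero l) t
  · rintro ⟨c, hpos, hrel⟩
    have hker : (S : Set n).indicator c ᵥ* B.map (algebraMap R K) = 0 :=
      funext fun t ↦ (indicator_vecMul_apply S c _ t).trans (hrel t)
    obtain ⟨l, hl⟩ := (hexact _).1 hker
    have hl_apply (i : n) : ∑ r, l r * algebraMap R K (A r i) = (S : Set n).indicator c i :=
      congrFun hl i
    exact ⟨l, fun i hi ↦ by simp [hl_apply, hi], fun i hi ↦ by simpa [hl_apply, hi] using hpos i hi⟩

/-- a subset `S` of a regular configuration is a face complement iff there is a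
positive rational combination of the Gale rows indexed by `S` summing to zero. -/
theorem stmt2 (d n : ℕ) (hd : 0 < d) (A : Matrix (Fin d) (Fin n) ℤ)
    (hreg : ∀ i : Fin n, A ⟨0, hd⟩ i = 1)
    (hrank : (A.map (Int.cast : ℤ → ℚ)).rank = d)
    (B : Matrix (Fin n) (Fin (n - d)) ℤ)
    (hBind : ∀ c : Fin (n - d) → ℤ, B.mulVec c = 0 → c = 0)
    (hBspan : ∀ v : Fin n → ℤ, A.mulVec v = 0 ↔ ∃ c : Fin (n - d) → ℤ, v = B.mulVec c)
    (S : Finset (Fin n)) :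
    (∃ l : Fin d → ℚ,
        (∀ i ∉ S, ∑ r, l r * (A r i : ℚ) = 0) ∧ ∀ i ∈ S, 0 < ∑ r, l r * (A r i : ℚ)) ↔
      ∃ c : Fin n → ℚ, (∀ i ∈ S, 0 < c i) ∧
        ∀ t : Fin (n - d), ∑ i ∈ S, c i * (B i t : ℚ) = 0 := by
  have : Module.Flat ℤ ℚ := IsLocalization.flat ℚ (nonZeroDivisors ℤ)
  exact stmt2_general (fun v ↦ (hBspan v).trans (exists_congr fun _ ↦ eq_comm)) S
end

section
/- Let A = (λ_1, …, λ_n) be a non pyramidal regular configuration in ℤ^d of rank d whose Gale dual B (with rows b_1, …, b_n) satisfies: for every 1-dimensional linear subspace L of ℚ^{n−d}, Σ_{i : b_i ∈ L} b_i = 0 (the self-duality criterion). Let S ⊆ {1, …, n} be nonempty and suppose the subconfiguration A_S = (λ_i)_{i∈S} is non pyramidal. Then: (a) any Gale dual B_S of A_S (with rows b'_i, i ∈ S) also satisfies the criterion, i.e. for every 1-dimensional linear subspace L' of the corresponding space, Σ_{i : b'_i ∈ L'} b'_i = 0; and (b) S is facial: there exists ℓ ∈ ℚ^d with ⟨ℓ,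 λ_i⟩ = 0 for all i ∈ S and ⟨ℓ, λ_i⟩ > 0 for all i ∉ S. -/
open scoped Classical

/-!
If a finite family of vectors sums to zero over every line, then it sums to zero over every linear
subspace, because the nonzero vectors of a subspace are partitioned by the lines they span. Hence
line sums still vanish after applying a linear map.

A relation among `(λ_i)_{i ∈ S}`, extended by zero, is a relation among all the `λ_i`. Dually, a
linear map `f` sends `b_i` to `b'_i` for `i ∈ S` and to `0` for `i ∉ S`, which gives (a). If `A_S`
is non pyramidal then no `b'_i` vanishes, so the `b_i` with `i ∉ S` are exactly those in `ker f`
and they sum to zero: the indicator of the complement of `S` is orthogonal to `ker A`, hence lies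
in the row space of `A`, which gives (b).
-/

open Matrix Module

/-- The self-duality criterion for a finite family of vectors, applied below to the rows of a Gale
dual: the members of the family lying on any given line through the origin sum to zero. -/
def IsLineBalanced (K : Type*) {V ι : Type*} [Field K] [AddCommGroup V] [Module K V] [Fintype ι]
    (b : ι → V) : Prop :=
  ∀ L : Submodule K V, finrank K L = 1 → ∑ i with b i ∈ L, b i = 0

namespace IsLineBalanced

variable {K V V' ι σ : Type*} [Field K] [AddCommGroup V] [Module K V] [AddCommGroup V']
  [Module K V'] [Fintype ι] [Fintype σ]

theorem sum_mem_eq_zero {b : ι → V} (hb : IsLineBalanced K b) (L : Submodule K V) :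
    ∑ i with b i ∈ L, b i = 0 := by
  rw [← Finset.sum_filter_ne_zero]
  refine Finset.sum_cancels_of_partition_cancels (Setoid.ker fun i ↦ Submodule.span K {b i}) ?_
  intro i hi
  simp only [Finset.mem_filter, Finset.mem_univ, true_and] at hi
  obtain ⟨hiL, hi₀⟩ := hi
  have span_eq_iff {j : ι} (hj₀ : b j ≠ 0) :
      Submodule.span K {b j} = Submodule.span K {b i} ↔ b j ∈ Submodule.span K {b i} := by
    rw [← Submodule.span_singleton_le_iff_mem,
      (nonzero_span_atom (b i) hi₀).le_iff_eq (by simpa using hj₀)]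
  refine Eq.trans ?_ (hb _ (finrank_span_singleton hi₀))
  rw [← Finset.sum_filter_ne_zero (s := {j | b j ∈ _})]
  refine Finset.sum_congr (Finset.ext fun j ↦ ?_) fun _ _ ↦ rfl
  simp only [Finset.mem_filter, Finset.mem_univ, true_and, Setoid.ker_def]
  constructor
  · rintro ⟨⟨-, hj₀⟩, hj⟩
    exact ⟨(span_eq_iff hj₀).1 hj, hj₀⟩
  · rintro ⟨hj, hj₀⟩
    exact ⟨⟨(Submodule.span_singleton_le_iff_mem _ _).2 hiL hj, hj₀⟩, (span_eq_iff hj₀).2 hj⟩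

theorem map {b : ι → V} (hb : IsLineBalanced K b) (f : V →ₗ[K] V') :
    IsLineBalanced K (f ∘ b) := fun L _ ↦
  calc ∑ i with f (b i) ∈ L, f (b i)
      = f (∑ i with b i ∈ L.comap f, b i) := by simp only [map_sum, Submodule.mem_comap]
    _ = 0 := by rw [hb.sum_mem_eq_zero, map_zero]

theorem of_extend_zero {e : σ → ι} (he : Function.Injective e) {b : σ → V}
    (hb : IsLineBalanced K (Function.extend e b 0)) : IsLineBalanced K b := by
  intro L hL
  rw [← hb L hL, Finset.sum_filter, Finset.sum_filter]
  refine Fintype.sum_of_injective e he _ _ (fun i hi ↦ ?_) fun j ↦ ?_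
  · simp [Function.extend_apply' b (0 : ι → V) i hi]
  · rw [he.extend_apply]

end IsLineBalanced

section Exact

variable {R K ρ ι κ σ τ : Type*}

theorem exists_vecMul_eq_of_forall_dotProduct_eq_zero [Field K] [Fintype ρ] [Fintype ι]
    {A : Matrix ρ ι K} {w : ι → K} (hw : ∀ v, A *ᵥ v = 0 → w ⬝ᵥ v = 0) :
    ∃ l : ρ → K, l ᵥ* A = w := by
  have mem_range : dotProductEquiv K ι w ∈ LinearMap.range A.mulVecLin.dualMap := by
    rw [LinearMap.range_dualMap_eq_dualAnnihilator_ker, Submodule.mem_dualAnnihilator]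
    exact hw
  obtain ⟨φ, hφ⟩ := mem_range
  refine ⟨(dotProductEquiv K ρ).symm φ, dotProduct_eq _ _ fun v ↦ ?_⟩
  calc (dotProductEquiv K ρ).symm φ ᵥ* A ⬝ᵥ v
      = dotProductEquiv K ρ ((dotProductEquiv K ρ).symm φ) (A *ᵥ v) :=
        (dotProduct_mulVec _ _ _).symm
    _ = φ (A *ᵥ v) := by rw [LinearEquiv.apply_symm_apply]
    _ = w ⬝ᵥ v := LinearMap.congr_fun hφ v

theorem mul_eq_zero_of_exact_mulVec [Semiring R] [Fintype ι] [Fintype κ] {A : Matrix ρ ι R}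
    {B : Matrix ι κ R} (hBA : Function.Exact B.mulVec A.mulVec) : A * B = 0 := by
  refine ext_of_mulVec_single fun t ↦ ?_
  rw [← mulVec_mulVec, hBA.apply_apply_eq_zero, zero_mulVec]

theorem exists_mul_eq_of_exact_mulVec [Semiring R] [Fintype ι] [Fintype κ] {A : Matrix ρ ι R}
    {B : Matrix ι κ R} (hBA : Function.Exact B.mulVec A.mulVec) {C : Matrix ι τ R}
    (hAC : A * C = 0) : ∃ X : Matrix κ τ R, B * X = C := by
  have col_mem_range (t : τ) : ∃ x, B *ᵥ x = C.col t :=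
    (hBA _).1 (funext fun r ↦ congrFun₂ hAC r t)
  choose X hX using col_mem_range
  exact ⟨of fun s t ↦ X t s, ext fun i t ↦ congrFun (hX t) i⟩

theorem exact_mulVec_map_algebraMap_s11 [CommRing R] [Field K] [Algebra R K] [IsFractionRing R K]
    [Fintype ι] [Fintype κ] {A : Matrix ρ ι R} {B : Matrix ι κ R}
    (hBA : Function.Exact B.mulVec A.mulVec) :
    Function.Exact (B.map (algebraMap R K)).mulVec (A.map (algebraMap R K)).mulVec := by
  intro v
  constructor
  · intro hv
    obtain ⟨q, hq⟩ := IsLocalization.exist_integer_multiples_of_finite (nonZeroDivisors R) v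
    choose w hw using hq
    have hw : algebraMap R K ∘ w = algebraMap R K q • v :=
      funext fun i ↦ (hw i).trans (Algebra.smul_def _ _)
    have hAw : A *ᵥ w = 0 := by
      ext r
      apply IsFractionRing.injective R K
      rw [RingHom.map_mulVec, hw, mulVec_smul, hv, smul_zero, Pi.zero_apply, Pi.zero_apply,
        map_zero]
    obtain ⟨c, rfl⟩ := (hBA w).1 hAw
    have hq₀ : algebraMap R K q ≠ 0 := (IsLocalization.map_units K q).ne_zero
    refine ⟨(algebraMap R K q)⁻¹ • algebraMap R K ∘ c, ?_⟩
    rw [mulVec_smul, inv_smul_eq_iff₀ hq₀, ← hw]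
    exact funext fun i ↦ (RingHom.map_mulVec _ _ _ _).symm
  · rintro ⟨c, rfl⟩
    rw [mulVec_mulVec, ← Matrix.map_mul, mul_eq_zero_of_exact_mulVec hBA,
      Matrix.map_zero _ (map_zero _), zero_mulVec]

theorem mul_extend_zero [Semiring R] [Fintype ι] [Fintype σ] {e : σ → ι}
    (he : Function.Injective e) (A : Matrix ρ ι R) (C : Matrix σ τ R) :
    A * of (Function.extend e C.row 0) = A.submatrix id e * C := by
  ext r t
  rw [Matrix.mul_apply, Matrix.mul_apply]
  refine (Fintype.sum_of_injective e he _ _ (fun i hi ↦ ?_) fun j ↦ ?_).symm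
  · simp [Function.extend_apply' C.row (0 : ι → τ → R) i hi]
  · simp [he.extend_apply]

theorem exists_mul_eq_extend_zero [Semiring R] [Fintype ι] [Fintype κ] [Fintype σ] {e : σ → ι}
    (he : Function.Injective e) {A : Matrix ρ ι R} {B : Matrix ι κ R} {C : Matrix σ τ R}
    (hBA : Function.Exact B.mulVec A.mulVec) (hAC : A.submatrix id e * C = 0) :
    ∃ X : Matrix κ τ R, B * X = of (Function.extend e C.row 0) :=
  exists_mul_eq_of_exact_mulVec hBA ((mul_extend_zero he A C).trans hAC)

end Exact

/-- The configuration of the columns of `A` is a pyramid: some linear form equals `1` on one column,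
the apex, and vanishes on all the others. Columns are indexed, so equal columns count as distinct
points. -/
def IsPyramidal {K ρ ι : Type*} [Field K] [Fintype ρ] (A : Matrix ρ ι K) : Prop :=
  ∃ (i₀ : ι) (l : ρ → K), (∀ i, i ≠ i₀ → (l ᵥ* A) i = 0) ∧ (l ᵥ* A) i₀ = 1

section Configuration

variable {K ρ ι κ σ τ : Type*} [Field K] [Fintype ι] [Fintype κ] [Fintype σ]
  {A : Matrix ρ ι K} {B : Matrix ι κ K} {C : Matrix σ τ K} {e : σ → ι}

theorem exists_vecMul_eq_indicator [Fintype ρ] (hBA : Function.Exact B.mulVec A.mulVec)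
    {T : Finset ι} (hT : ∑ i ∈ T, B.row i = 0) :
    ∃ l : ρ → K, l ᵥ* A = Set.indicator T 1 := by
  refine exists_vecMul_eq_of_forall_dotProduct_eq_zero fun v hv ↦ ?_
  obtain ⟨c, rfl⟩ := (hBA v).1 hv
  have indicator_vecMul : Set.indicator (T : Set ι) 1 ᵥ* B = 0 := by
    rw [← hT]
    ext t
    simp [vecMul, dotProduct, Set.indicator_apply]
  rw [dotProduct_mulVec, indicator_vecMul, zero_dotProduct]

theorem isPyramidal_of_row_eq_zero [Fintype ρ] (hBA : Function.Exact B.mulVec A.mulVec) {i₀ : ι}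
    (hi₀ : B.row i₀ = 0) : IsPyramidal A := by
  obtain ⟨l, hl⟩ := exists_vecMul_eq_indicator hBA (T := {i₀}) (by simpa using hi₀)
  refine ⟨i₀, l, fun i hi ↦ ?_, ?_⟩ <;> simp_all

theorem IsLineBalanced.row_of_submatrix_mul_eq_zero (hB : IsLineBalanced K B.row)
    (he : Function.Injective e) (hBA : Function.Exact B.mulVec A.mulVec)
    (hAC : A.submatrix id e * C = 0) : IsLineBalanced K C.row := by
  obtain ⟨X, hX⟩ := exists_mul_eq_extend_zero he hBA hAC
  have rows_eq : X.vecMulLinear ∘ B.row = Function.extend e C.row 0 := hX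
  exact .of_extend_zero he (rows_eq ▸ hB.map X.vecMulLinear)

theorem IsLineBalanced.exists_vecMul_eq_indicator_compl_range [Fintype ρ] [Fintype τ]
    (hB : IsLineBalanced K B.row) (he : Function.Injective e)
    (hBA : Function.Exact B.mulVec A.mulVec)
    (hC : Function.Exact C.mulVec (A.submatrix id e).mulVec)
    (hA : ¬ IsPyramidal (A.submatrix id e)) :
    ∃ l : ρ → K, l ᵥ* A = Set.indicator (Set.range e)ᶜ 1 := by
  obtain ⟨X, hX⟩ := exists_mul_eq_extend_zero he hBA (mul_eq_zero_of_exact_mulVec hC)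
  have rows_eq (i : ι) : B.row i ᵥ* X = Function.extend e C.row 0 i := congrFun hX i
  have mem_ker_iff (i : ι) : B.row i ∈ X.vecMulLinear.ker ↔ i ∉ Set.range e := by
    rw [LinearMap.mem_ker, vecMulLinear_apply, rows_eq]
    constructor
    · rintro hi ⟨j, rfl⟩
      exact hA (isPyramidal_of_row_eq_zero hC ((he.extend_apply C.row 0 j).symm.trans hi))
    · exact Function.extend_apply' C.row (0 : ι → τ → K) i
  obtain ⟨l, hl⟩ := exists_vecMul_eq_indicator hBA (hB.sum_mem_eq_zero X.vecMulLinear.ker)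
  refine ⟨l, hl.trans ?_⟩
  congr 1
  ext i
  simpa using mem_ker_iff i

end Configuration

theorem stmt11_general {R K ρ ι κ τ : Type*} [CommRing R] [Field K] [Algebra R K]
    [IsFractionRing R K] [Fintype ρ] [Fintype ι] [Fintype κ] [Fintype τ] {A : Matrix ρ ι R}
    {B : Matrix ι κ R} (hBA : Function.Exact B.mulVec A.mulVec)
    (hB : IsLineBalanced K (B.map (algebraMap R K)).row) {S : Finset ι}
    {C : Matrix {i // i ∈ S} τ R}
    (hC : Function.Exact C.mulVec (A.submatrix id Subtype.val).mulVec) :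
    IsLineBalanced K (C.map (algebraMap R K)).row ∧
      (¬ IsPyramidal ((A.map (algebraMap R K)).submatrix id (Subtype.val : {i // i ∈ S} → ι)) →
        ∃ l : ρ → K, (∀ i ∈ S, (l ᵥ* A.map (algebraMap R K)) i = 0) ∧
          ∀ i ∉ S, (l ᵥ* A.map (algebraMap R K)) i = 1) := by
  have hBA' := exact_mulVec_map_algebraMap_s11 (K := K) hBA
  have hC' := exact_mulVec_map_algebraMap_s11 (K := K) hC
  refine ⟨hB.row_of_submatrix_mul_eq_zero Subtype.val_injective hBA'
    (mul_eq_zero_of_exact_mulVec hC'), fun hS ↦ ?_⟩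
  obtain ⟨l, hl⟩ :=
    hB.exists_vecMul_eq_indicator_compl_range Subtype.val_injective hBA' hC' hS
  exact ⟨l, fun i hi ↦ by simp [hl, hi], fun i hi ↦ by simp [hl, hi]⟩

/-- a non pyramidal subconfiguration of a self-dual non pyramidal regular
configuration again satisfies the self-duality (line-sum) criterion on any of its Gale
duals, and it is a facial subset. -/
theorem stmt11 (d n : ℕ) (hd : 0 < d) (A : Matrix (Fin d) (Fin n) ℤ)
    (hreg : ∀ i : Fin n, A ⟨0, hd⟩ i = 1)
    (hrank : (A.map (Int.cast : ℤ → ℚ)).rank = d)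
    (hnp : ¬ ∃ (i₀ : Fin n) (l : Fin d → ℚ),
        (∀ i : Fin n, i ≠ i₀ → ∑ r, l r * (A r i : ℚ) = 0) ∧
        ∑ r, l r * (A r i₀ : ℚ) = 1)
    (B : Matrix (Fin n) (Fin (n - d)) ℤ)
    (hBind : ∀ c : Fin (n - d) → ℤ, B.mulVec c = 0 → c = 0)
    (hBspan : ∀ v : Fin n → ℤ, A.mulVec v = 0 ↔ ∃ c : Fin (n - d) → ℤ, v = B.mulVec c)
    (hsd : ∀ L : Submodule ℚ (Fin (n - d) → ℚ), Module.finrank ℚ L = 1 →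
      ∑ i ∈ Finset.univ.filter (fun i : Fin n => (fun t => (B i t : ℚ)) ∈ L),
        (fun t => (B i t : ℚ)) = (0 : Fin (n - d) → ℚ))
    (S : Finset (Fin n)) (hSne : S.Nonempty)
    (hSnp : ¬ ∃ (i₀ : {i // i ∈ S}) (l : Fin d → ℚ),
        (∀ i : {i // i ∈ S}, i ≠ i₀ → ∑ r, l r * (A r i.1 : ℚ) = 0) ∧
        ∑ r, l r * (A r i₀.1 : ℚ) = 1)
    (m' : ℕ) (BS : Matrix {i // i ∈ S} (Fin m') ℤ)
    (hBSind : ∀ c : Fin m' → ℤ, BS.mulVec c = 0 → c = 0)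
    (hBSspan : ∀ v : {i // i ∈ S} → ℤ,
      (Matrix.of fun (r : Fin d) (i : {i // i ∈ S}) => A r i.1).mulVec v = 0 ↔
        ∃ c : Fin m' → ℤ, v = BS.mulVec c) :
    (∀ L' : Submodule ℚ (Fin m' → ℚ), Module.finrank ℚ L' = 1 →
      ∑ i ∈ Finset.univ.filter (fun i : {i // i ∈ S} => (fun t => (BS i t : ℚ)) ∈ L'),
        (fun t => (BS i t : ℚ)) = (0 : Fin m' → ℚ)) ∧
    ∃ l : Fin d → ℚ,
      (∀ i ∈ S, ∑ r, l r * (A r i : ℚ) = 0) ∧ ∀ i ∉ S, 0 < ∑ r, l r * (A r i : ℚ) := by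
  obtain ⟨hBS, hface⟩ := stmt11_general (C := BS)
    (fun v ↦ (hBspan v).trans (exists_congr fun _ ↦ eq_comm)) hsd
    (fun v ↦ (hBSspan v).trans (exists_congr fun _ ↦ eq_comm))
  obtain ⟨l, hl_zero, hl_one⟩ := hface hSnp
  exact ⟨hBS, l, hl_zero, fun i hi ↦ one_pos.trans_eq (hl_one i hi).symm⟩
end

section
/- Let M ∈ ℤ^{d×n} and let Λ(M) ∈ ℤ^{(n+d)×2n} be the Lawrence matrix [[Id_n, Id_n],[0, M]]. Then: (i) ker_ℤ(Λ(M)) = {(−v, v) : v ∈ ℤ^n, Mv = 0}; and (ii) any Gale dual B of Λ(M), with rows b_1, …, b_{2n}, satisfies b_{n+j} = −b_j for all j = 1, …, n, and consequently satisfies the line-sum condition: for every 1-dimensional linear subspace L of the column space, Σ_{i : b_i ∈ L} b_i = 0. (By Theorem teo:Bside, this proves Corollary 5.2: the toric variety of any non pyramidal Lawrence configuration is self-dual.) -/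
open scoped Classical

section LineSum

variable {ι E S : Type*} [Fintype ι] [AddCommGroup E] [SetLike S E] [NegMemClass S E]

theorem sum_filter_mem_eq_zero_of_inr_eq_neg_inl {b : ι ⊕ ι → E}
    (hb : ∀ j, b (Sum.inr j) = -b (Sum.inl j)) (L : S) [DecidablePred fun i => b i ∈ L] :
    ∑ i with b i ∈ L, b i = 0 := by
  rw [Finset.sum_filter, Fintype.sum_sum_type, ← Finset.sum_add_distrib]
  refine Finset.sum_eq_zero fun j _ => ?_
  -- Opposite vectors lie in `L` together or not at all, so the `j`-th pair always cancels.
  have mem_iff : b (Sum.inr j) ∈ L ↔ b (Sum.inl j) ∈ L := by rw [hb, neg_mem_iff]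
  by_cases hj : b (Sum.inl j) ∈ L
  · rw [if_pos hj, if_pos (mem_iff.2 hj), hb, add_neg_cancel]
  · rw [if_neg hj, if_neg (mt mem_iff.1 hj), add_zero]

end LineSum

theorem matrix_mul_eq_zero_of_forall_mulVec_mulVec_eq_zero {R ι κ τ : Type*} [Semiring R]
    [Fintype ι] [Fintype τ] {A : Matrix κ ι R} {B : Matrix ι τ R}
    (h : ∀ c : τ → R, A.mulVec (B.mulVec c) = 0) : A * B = 0 := by
  refine Matrix.ext_of_mulVec_single fun t => ?_
  rw [← Matrix.mulVec_mulVec, h, Matrix.zero_mulVec]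

section Lawrence

variable {R ι κ τ : Type*} [DecidableEq ι]

/-- The Lawrence matrix `Λ(M) = [[Id, Id], [0, M]]` of `M`, whose columns form the Lawrence
configuration; its row and column blocks are indexed by sum types. -/
def lawrenceMatrix [Zero R] [One R] (M : Matrix κ ι R) : Matrix (ι ⊕ κ) (ι ⊕ ι) R :=
  Matrix.fromBlocks 1 1 0 M

variable [Fintype ι]

theorem lawrenceMatrix_mulVec [NonAssocSemiring R] (M : Matrix κ ι R) (v : ι ⊕ ι → R) :
    (lawrenceMatrix M).mulVec v =
      Sum.elim (v ∘ Sum.inl + v ∘ Sum.inr) (M.mulVec (v ∘ Sum.inr)) := by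
  rw [lawrenceMatrix, Matrix.fromBlocks_mulVec, Matrix.one_mulVec, Matrix.one_mulVec,
    Matrix.zero_mulVec, zero_add]

variable [NonAssocRing R]

theorem lawrenceMatrix_mulVec_eq_zero_iff (M : Matrix κ ι R) (v : ι ⊕ ι → R) :
    (lawrenceMatrix M).mulVec v = 0 ↔ ∃ w : ι → R, M.mulVec w = 0 ∧ v = Sum.elim (-w) w := by
  rw [lawrenceMatrix_mulVec, ← Sum.elim_zero_zero, Sum.elim_eq_iff]
  constructor
  · rintro ⟨halves_add, hM⟩
    refine ⟨v ∘ Sum.inr, hM, ?_⟩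
    rw [← eq_neg_of_add_eq_zero_left halves_add, Sum.elim_comp_inl_inr]
  · rintro ⟨w, hw, rfl⟩
    exact ⟨neg_add_cancel w, hw⟩

theorem row_inr_eq_neg_row_inl_of_lawrenceMatrix_mul_eq_zero {M : Matrix κ ι R}
    {B : Matrix (ι ⊕ ι) τ R} (hB : lawrenceMatrix M * B = 0) (j : ι) :
    B (Sum.inr j) = -B (Sum.inl j) := by
  funext t
  have col_mem_ker : (lawrenceMatrix M).mulVec (B.col t) = 0 :=
    funext fun i => congrFun (congrFun hB i) t
  obtain ⟨w, -, hw⟩ := (lawrenceMatrix_mulVec_eq_zero_iff M _).1 col_mem_ker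
  have inl_eq : B (Sum.inl j) t = -w j := congrFun hw (Sum.inl j)
  have inr_eq : B (Sum.inr j) t = w j := congrFun hw (Sum.inr j)
  rw [Pi.neg_apply, inl_eq, inr_eq, neg_neg]

theorem stmt12_general {K : Type*} [Ring K] (f : R →+* K) (M : Matrix κ ι R)
    (B : Matrix (ι ⊕ ι) τ R) (hB : lawrenceMatrix M * B = 0) :
    (∀ v : ι ⊕ ι → R, (lawrenceMatrix M).mulVec v = 0 ↔
      ∃ w : ι → R, M.mulVec w = 0 ∧ v = Sum.elim (-w) w) ∧
    (∀ j, B (Sum.inr j) = -B (Sum.inl j)) ∧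
    (∀ L : Submodule K (τ → K), ∑ i with f ∘ B i ∈ L, f ∘ B i = 0) := by
  have opposite_rows := row_inr_eq_neg_row_inl_of_lawrenceMatrix_mul_eq_zero hB
  refine ⟨lawrenceMatrix_mulVec_eq_zero_iff M, opposite_rows, fun L => ?_⟩
  refine sum_filter_mem_eq_zero_of_inr_eq_neg_inl (b := fun i => f ∘ B i) (fun j => ?_) L
  funext t
  simp [opposite_rows]

end Lawrence

/-- the integer kernel of the Lawrence matrix `[[Id, Id],[0, M]]` consists of
the vectors `(-v, v)` with `Mv = 0`, and any Gale dual `B` of the Lawrence configuration has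
opposite rows `b_{n+j} = -b_j`, hence satisfies the line-sum criterion. -/
theorem stmt12 (d n : ℕ) (M : Matrix (Fin d) (Fin n) ℤ)
    (m : ℕ) (B : Matrix (Fin n ⊕ Fin n) (Fin m) ℤ)
    (hBind : ∀ c : Fin m → ℤ, B.mulVec c = 0 → c = 0)
    (hBspan : ∀ v : (Fin n ⊕ Fin n) → ℤ,
      (Matrix.fromBlocks (1 : Matrix (Fin n) (Fin n) ℤ) (1 : Matrix (Fin n) (Fin n) ℤ)
          (0 : Matrix (Fin d) (Fin n) ℤ) M).mulVec v = 0 ↔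
        ∃ c : Fin m → ℤ, v = B.mulVec c) :
    (∀ v : (Fin n ⊕ Fin n) → ℤ,
      (Matrix.fromBlocks (1 : Matrix (Fin n) (Fin n) ℤ) (1 : Matrix (Fin n) (Fin n) ℤ)
          (0 : Matrix (Fin d) (Fin n) ℤ) M).mulVec v = 0 ↔
        ∃ w : Fin n → ℤ, M.mulVec w = 0 ∧ v = Sum.elim (fun j => - w j) w) ∧
    (∀ (j : Fin n) (t : Fin m), B (Sum.inr j) t = - B (Sum.inl j) t) ∧
    (∀ L : Submodule ℚ (Fin m → ℚ), Module.finrank ℚ L = 1 →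
      ∑ i ∈ Finset.univ.filter (fun i : Fin n ⊕ Fin n => (fun t => (B i t : ℚ)) ∈ L),
        (fun t => (B i t : ℚ)) = (0 : Fin m → ℚ)) := by
  obtain ⟨ker_iff, opposite_rows, line_sum⟩ := stmt12_general (Int.castRingHom ℚ) M B <|
    matrix_mul_eq_zero_of_forall_mulVec_mulVec_eq_zero fun c => (hBspan _).2 ⟨c, rfl⟩
  exact ⟨ker_iff, fun j => congrFun (opposite_rows j), fun L _ => line_sum L⟩
end

section
/- Let m ≥ 2 and let A' ∈ ℤ^{(m+1)×2m} be the matrix [[Id_m, Id_m],[0 ⋯ 0, 1 ⋯ 1]] (the weight matrix of the Segre embedding of ℙ¹ × ℙ^{m−1} in ℙ^{2m−1}). A matrix B ∈ ℤ^{2m×(m−1)} with rows b_1, …, b_{2m} ∈ ℤ^{m−1} has its columns forming a ℤ-basis of ker_ℤ(A') if and only if: b_{m+j} = −b_j for all j = 1, …, m, b_1 + ⋯ + b_m = 0, and (b_1, …, b_{m−1}) is a ℤ-basis of ℤ^{m−1} (equivalently, the matrix with rows b_1, …, b_{m−1} has determinant ±1). -/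
/-!
A vector of `ker A'` has the form `(x, -x)` with `∑ x = 0`, so it is determined by the first `m - 1`
entries of `x`, and these can be prescribed freely. Reading off these entries identifies `ker A'`
with a free module of rank `m - 1`. Under this identification the columns of `B`, once they lie in
`ker A'`, become the columns of the square matrix with rows `b_1, …, b_{m-1}`, and they form a basis
exactly when that matrix is invertible.
-/

open Matrix

section GaleDual

variable {R l m n : Type*} [Fintype l] [Fintype n]

/-- `B` is a Gale dual of `A`: the columns of `B` form an `R`-basis of the kernel of `A`. Linear
independence and spanning are expressed through the coefficient vectors `c` of the combinations
`B *ᵥ c` of the columns. -/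
def IsGaleDual [Ring R] (A : Matrix m l R) (B : Matrix l n R) : Prop :=
  (∀ c : n → R, B *ᵥ c = 0 → c = 0) ∧ ∀ v : l → R, A *ᵥ v = 0 ↔ ∃ c : n → R, v = B *ᵥ c

theorem IsGaleDual.mul_eq_zero [Ring R] {A : Matrix m l R} {B : Matrix l n R}
    (h : IsGaleDual A B) : A * B = 0 := by
  refine mulVec_injective (funext fun c => ?_)
  rw [← mulVec_mulVec, zero_mulVec]
  exact (h.2 _).2 ⟨c, rfl⟩

theorem isGaleDual_iff_isUnit_det_submatrix [CommRing R] [DecidableEq n] {A : Matrix m l R}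
    {s : n → l} (hs : Set.BijOn (fun v : l → R => v ∘ s) {v | A *ᵥ v = 0} Set.univ)
    (B : Matrix l n R) :
    IsGaleDual A B ↔ A * B = 0 ∧ IsUnit (B.submatrix s id).det := by
  have submatrix_mulVec (c : n → R) : B.submatrix s id *ᵥ c = (B *ᵥ c) ∘ s := rfl
  rw [← isUnit_iff_isUnit_det]
  constructor
  · refine fun h => ⟨h.mul_eq_zero, mulVec_surjective_iff_isUnit.1 fun w => ?_⟩
    obtain ⟨v, hv, rfl⟩ := hs.surjOn (Set.mem_univ w)
    obtain ⟨c, rfl⟩ := (h.2 v).1 hv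
    exact ⟨c, submatrix_mulVec c⟩
  · rintro ⟨hAB, hunit⟩
    have mulVec_mem_ker (c : n → R) : A *ᵥ (B *ᵥ c) = 0 := by
      rw [mulVec_mulVec, hAB, zero_mulVec]
    refine ⟨fun c hc => mulVec_injective_of_isUnit hunit ?_, fun v => ⟨fun hv => ?_, ?_⟩⟩
    · rw [submatrix_mulVec, hc, mulVec_zero, Pi.zero_comp]
    · obtain ⟨c, hc⟩ := mulVec_surjective_iff_isUnit.2 hunit (v ∘ s)
      exact ⟨c, hs.injOn hv (mulVec_mem_ker c) hc.symm⟩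
    · rintro ⟨c, rfl⟩
      exact mulVec_mem_ker c

end GaleDual

section Segre

variable {R : Type*} [Ring R]

/-- The matrix `A' = [[Id, Id], [0 ⋯ 0, 1 ⋯ 1]]`, the weight matrix of the Segre embedding of
`ℙ¹ × ℙ^{m-1}`, where `m` is the size of `ι`. The two copies of `ι` in `ι ⊕ ι` index the first and
the last `m` columns. -/
def segreMatrix (R ι : Type*) [Zero R] [One R] [DecidableEq ι] : Matrix (ι ⊕ Unit) (ι ⊕ ι) R :=
  fromBlocks 1 1 0 (of fun _ _ => 1)

theorem segreMatrix_mulVec_eq_zero_iff {ι : Type*} [Fintype ι] [DecidableEq ι] (v : ι ⊕ ι → R) :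
    segreMatrix R ι *ᵥ v = 0 ↔
      (∀ j, v (Sum.inr j) = -v (Sum.inl j)) ∧ ∑ j, v (Sum.inl j) = 0 := by
  have entries : segreMatrix R ι *ᵥ v = 0 ↔
      (∀ j, v (Sum.inl j) + v (Sum.inr j) = 0) ∧ ∑ j, v (Sum.inr j) = 0 := by
    simp [segreMatrix, fromBlocks_mulVec, funext_iff, mulVec, dotProduct]
  simp only [entries, ← neg_eq_iff_add_eq_zero, eq_comm (a := -v _)]
  refine and_congr_right fun h => ?_
  simp only [h, Finset.sum_neg_distrib, neg_eq_zero]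

theorem segreMatrix_mul_eq_zero_iff {ι n : Type*} [Fintype ι] [DecidableEq ι]
    (B : Matrix (ι ⊕ ι) n R) :
    segreMatrix R ι * B = 0 ↔
      (∀ j t, B (Sum.inr j) t = -B (Sum.inl j) t) ∧ ∀ t, ∑ j, B (Sum.inl j) t = 0 := by
  have columns : segreMatrix R ι * B = 0 ↔ ∀ t, segreMatrix R ι *ᵥ B.col t = 0 := by
    simp only [← Matrix.ext_iff, funext_iff]
    exact forall_comm
  simp only [columns, segreMatrix_mulVec_eq_zero_iff, col_apply, forall_and]
  rw [forall_comm]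

theorem bijOn_comp_inl_castSucc_ker_segreMatrix (n : ℕ) :
    Set.BijOn (fun v : Fin (n + 1) ⊕ Fin (n + 1) → R => v ∘ (Sum.inl ∘ Fin.castSucc))
      {v | segreMatrix R (Fin (n + 1)) *ᵥ v = 0} Set.univ := by
  simp only [segreMatrix_mulVec_eq_zero_iff, Fin.sum_univ_castSucc]
  refine ⟨Set.mapsTo_univ _ _, ?_, fun w _ => ?_⟩
  · rintro v ⟨hv_neg, hv_sum⟩ w ⟨hw_neg, hw_sum⟩ hvw
    have eq_castSucc (i : Fin n) : v (Sum.inl i.castSucc) = w (Sum.inl i.castSucc) :=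
      congrFun hvw i
    have eq_last : v (Sum.inl (Fin.last n)) = w (Sum.inl (Fin.last n)) := by
      simp only [eq_castSucc] at hv_sum
      exact add_left_cancel (hv_sum.trans hw_sum.symm)
    have eq_inl (j : Fin (n + 1)) : v (Sum.inl j) = w (Sum.inl j) :=
      Fin.lastCases eq_last eq_castSucc j
    ext (j | j)
    · exact eq_inl j
    · rw [hv_neg, hw_neg, eq_inl]
  · let x : Fin (n + 1) → R := Fin.snoc w (-∑ i, w i)
    refine ⟨Sum.elim x (-x), ⟨fun _ => rfl, ?_⟩, ?_⟩
    · simp [x]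
    · ext i
      simp [x]

end Segre

theorem stmt13_general {R : Type*} [CommRing R] {n : ℕ}
    (B : Matrix (Fin (n + 1) ⊕ Fin (n + 1)) (Fin n) R) :
    IsGaleDual (segreMatrix R (Fin (n + 1))) B ↔
      (∀ j t, B (Sum.inr j) t = -B (Sum.inl j) t) ∧ (∀ t, ∑ j, B (Sum.inl j) t = 0) ∧
        IsUnit (B.submatrix (Sum.inl ∘ Fin.castSucc) id).det := by
  rw [isGaleDual_iff_isUnit_det_submatrix (bijOn_comp_inl_castSucc_ker_segreMatrix n),
    segreMatrix_mul_eq_zero_iff, and_assoc]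

/-- Lemma 5.6: Gale-dual characterization of the Segre configuration
`A' = [[Id_m, Id_m],[0…0, 1…1]]` with `m = k + 2 ≥ 2`: a matrix `B ∈ ℤ^{2m×(m-1)}` has
columns forming a ℤ-basis of `ker_ℤ(A')` iff `b_{m+j} = -b_j`, `b_1 + ⋯ + b_m = 0` and
the matrix with rows `b_1, …, b_{m-1}` has determinant `±1`. -/
theorem stmt13 (k : ℕ) (B : Matrix (Fin (k + 2) ⊕ Fin (k + 2)) (Fin (k + 1)) ℤ) :
    ((∀ c : Fin (k + 1) → ℤ, B.mulVec c = 0 → c = 0) ∧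
      ∀ v : (Fin (k + 2) ⊕ Fin (k + 2)) → ℤ,
        (Matrix.fromBlocks (1 : Matrix (Fin (k + 2)) (Fin (k + 2)) ℤ)
            (1 : Matrix (Fin (k + 2)) (Fin (k + 2)) ℤ)
            (0 : Matrix Unit (Fin (k + 2)) ℤ)
            (Matrix.of fun (_ : Unit) (_ : Fin (k + 2)) => (1 : ℤ))).mulVec v = 0 ↔
          ∃ c : Fin (k + 1) → ℤ, v = B.mulVec c) ↔
    ((∀ (j : Fin (k + 2)) (t : Fin (k + 1)), B (Sum.inr j) t = - B (Sum.inl j) t) ∧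
      (∀ t : Fin (k + 1), ∑ j : Fin (k + 2), B (Sum.inl j) t = 0) ∧
      ((Matrix.of fun (i t : Fin (k + 1)) => B (Sum.inl i.castSucc) t).det = 1 ∨
        (Matrix.of fun (i t : Fin (k + 1)) => B (Sum.inl i.castSucc) t).det = -1)) := by
  rw [← Int.isUnit_iff]
  exact stmt13_general B
end

section
/- Let k be an algebraically closed field of characteristic 0. Let B ∈ ℤ^{n×m} be a matrix with entries b_{ji} (j = 1, …, n; i = 1, …, m) whose rows b_1, …, b_n ∈ ℤ^m are all nonzero. Then the following are equivalent: (I) for every i ∈ {1, …, m} and every s ∈ k^m, ∏_{j : b_{ji} > 0} ⟨s, b_j⟩^{b_{ji}} = ∏_{j : b_{ji} < 0} ⟨s, b_j⟩^{−b_{ji}}, where ⟨s, b_j⟩ = Σ_{t=1}^m s_t·b_{jt} ∈ k (with the integer entries cast into k); (II) both (a) for every 1-dimensional linear subspace L of ℚ^m, Σ_{j : b_j ∈ L} b_j = 0, and (b) for every i ∈ {1, …, m}, ∏_{j : b_{ji} > 0} b_{ji}^{b_{ji}} = ∏_{j : b_{ji} < 0} b_{ji}^{−b_{ji}} as integers.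 (This is the criterion of Theorem 6.3: for a non pyramidal regular configuration A with Gale dual B, conditions (a) and (b) characterize when the toric variety X_A is strongly self-dual.) -/
open scoped Classical

/-!
Both sides of the `i`-th identity are products of linear forms `⟨s, b_j⟩`. As the identity has
integer coefficients, it holds on `K` exactly when it holds in the factorial ring `ℚ[s]`, where
nonzero linear forms are prime and two of them are associated exactly when their coefficient
vectors span the same line. Counting prime factors, the two sides are associated if and only if
on every line the `i`-th coordinates of the rows sum to zero. The unit relating them is a constant,
so it is `1` if and only if the two sides agree at one point where they do not vanish; the
`i`-th basis vector is such a point, and the values there are the two products in (b).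
-/

open MvPolynomial

section Exponents

lemma sum_eq_zero_iff_sum_toNat_eq {ι : Type*} (S : Finset ι) (c : ι → ℤ) :
    ∑ j ∈ S, c j = 0 ↔ ∑ j ∈ S, (c j).toNat = ∑ j ∈ S, (-c j).toNat := by
  calc ∑ j ∈ S, c j = 0
    _ ↔ ∑ j ∈ S, ((c j).toNat : ℤ) - ∑ j ∈ S, ((-c j).toNat : ℤ) = 0 := by
      simp only [← Finset.sum_sub_distrib, Int.toNat_sub_toNat_neg]
    _ ↔ _ := by rw [sub_eq_zero]; norm_cast

variable {ι M : Type*} [Fintype ι] [CommMonoid M]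

lemma prod_filter_pos_pow_toNat (c : ι → ℤ) (q : ι → M) :
    ∏ j with 0 < c j, q j ^ (c j).toNat = ∏ j, q j ^ (c j).toNat :=
  Finset.prod_filter_of_ne fun j _ hj => by
    contrapose! hj
    rw [Int.toNat_of_nonpos hj, pow_zero]

lemma prod_filter_neg_pow_toNat_neg (c : ι → ℤ) (q : ι → M) :
    ∏ j with c j < 0, q j ^ (-c j).toNat = ∏ j, q j ^ (-c j).toNat := by
  simpa only [Left.neg_pos_iff] using prod_filter_pos_pow_toNat (fun j => -c j) q

lemma prod_pow_eq_prod_image_pow_sum (e : ι → ℕ) (q : ι → M) :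
    ∏ j, q j ^ e j = ∏ a ∈ Finset.univ.image q, a ^ ∑ j with q j = a, e j := by
  rw [← Finset.prod_fiberwise_of_maps_to fun j hj => Finset.mem_image_of_mem q hj]
  refine Finset.prod_congr rfl fun a _ => ?_
  rw [← Finset.prod_pow_eq_pow_sum]
  exact Finset.prod_congr rfl fun j hj => by rw [(Finset.mem_filter.1 hj).2]

end Exponents

section UniqueFactorization

variable {ι M : Type*} [Fintype ι] [CommMonoidWithZero M] [IsCancelMulZero M]

lemma emultiplicity_of_prime_of_prime [Subsingleton Mˣ] {p q : M} (hp : Prime p) (hq : Prime q) :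
    emultiplicity p q = if q = p then 1 else 0 := by
  split_ifs with h
  · simpa [h] using emultiplicity_pow_self hp.ne_zero hp.not_isUnit 1
  · rw [emultiplicity_eq_zero, hp.dvd_prime_iff_associated hq, associated_iff_eq]
    exact Ne.symm h

lemma emultiplicity_prod_prime_pow [Subsingleton Mˣ] {p : M} (hp : Prime p) {q : ι → M}
    {e : ι → ℕ} (hq : ∀ j, e j ≠ 0 → Prime (q j)) :
    emultiplicity p (∏ j, q j ^ e j) = ↑(∑ j with q j = p, e j) := by
  rw [Finset.emultiplicity_prod hp, Finset.sum_filter, Nat.cast_sum]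
  refine Finset.sum_congr rfl fun j _ => ?_
  rw [emultiplicity_pow hp]
  by_cases hj : e j = 0
  · simp [hj]
  · rw [emultiplicity_of_prime_of_prime hp (hq j hj)]
    split_ifs <;> simp

lemma prod_prime_pow_toNat_eq_iff [Subsingleton Mˣ] {q : ι → M} {c : ι → ℤ}
    (hq : ∀ j, c j ≠ 0 → Prime (q j)) :
    ∏ j, q j ^ (c j).toNat = ∏ j, q j ^ (-c j).toNat ↔
      ∀ a, ∑ j with q j = a, c j = 0 := by
  constructor
  · intro h a
    by_cases ha : Prime a
    · rw [sum_eq_zero_iff_sum_toNat_eq, ← Nat.cast_inj (R := ℕ∞),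
        ← emultiplicity_prod_prime_pow ha fun j hj => hq j (by lia),
        ← emultiplicity_prod_prime_pow ha fun j hj => hq j (by lia), h]
    · refine Finset.sum_eq_zero fun j hj => ?_
      contrapose! ha
      exact (Finset.mem_filter.1 hj).2 ▸ hq j ha
  · intro h
    simp only [prod_pow_eq_prod_image_pow_sum, (sum_eq_zero_iff_sum_toNat_eq _ c).1 (h _)]

lemma associated_prod_prime_pow_toNat_iff {q : ι → M} {c : ι → ℤ}
    (hq : ∀ j, c j ≠ 0 → Prime (q j)) :
    Associated (∏ j, q j ^ (c j).toNat) (∏ j, q j ^ (-c j).toNat) ↔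
      ∀ a, ∑ j with Associated (q j) a, c j = 0 := by
  rw [← Associates.mk_eq_mk_iff_associated, ← Associates.finsetProd_mk,
    ← Associates.finsetProd_mk]
  simp only [Associates.mk_pow, ← Associates.mk_eq_mk_iff_associated]
  rw [prod_prime_pow_toNat_eq_iff fun j hj => Associates.prime_mk.2 (hq j hj),
    Associates.forall_associated]
  congr!

end UniqueFactorization

section Polynomials

variable {σ : Type*}

lemma forall_aeval_eq_iff {K : Type*} [CommRing K] [CharZero K] {P Q : MvPolynomial σ ℤ} :
    (∀ s : σ → K, aeval s P = aeval s Q) ↔ P = Q := by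
  refine ⟨fun h => MvPolynomial.funext fun x => ?_, fun h s => h ▸ rfl⟩
  apply (algebraMap ℤ K).injective_int
  simpa only [aeval_algebraMap_apply, aeval_eq_eval] using h (algebraMap ℤ K ∘ x)

lemma eq_iff_associated_and_eval_eq {R : Type*} [CommRing R] [IsDomain R]
    {P Q : MvPolynomial σ R} {x : σ → R} (hx : eval x P ≠ 0) :
    P = Q ↔ Associated P Q ∧ eval x P = eval x Q := by
  refine ⟨fun h => h ▸ ⟨Associated.refl P, rfl⟩, ?_⟩
  rintro ⟨⟨u, rfl⟩, h⟩
  obtain ⟨r, -, hr⟩ := isUnit_iff_eq_C_of_isReduced.1 u.isUnit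
  rw [hr, map_mul, eval_C, left_eq_mul₀ hx] at h
  rw [hr, h, C_1, mul_one]

end Polynomials

section LinearForms

variable {σ R F : Type*} [Fintype σ] [CommRing R] [Field F]

/-- The linear form `∑ t, b t • X t` with coefficient vector `b`, as a polynomial: it is the
polynomial function `s ↦ ⟨s, b⟩`. -/
noncomputable def linearForm : (σ → R) →ₗ[R] MvPolynomial σ R :=
  Fintype.linearCombination R X

lemma linearForm_apply (b : σ → R) : linearForm b = ∑ t, b t • X t := rfl

lemma aeval_linearForm {A : Type*} [CommRing A] [Algebra R A] (s : σ → A) (b : σ → R) :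
    aeval s (linearForm b) = ∑ t, s t * algebraMap R A (b t) := by
  simp [linearForm_apply, Algebra.smul_def, mul_comm]

lemma eval_single_linearForm (i : σ) (b : σ → R) :
    eval (Pi.single i 1) (linearForm b) = b i := by
  simp [linearForm_apply, smul_eval, Pi.single_apply]

lemma map_linearForm {S : Type*} [CommRing S] (f : R →+* S) (b : σ → R) :
    map f (linearForm b) = linearForm fun t => f (b t) := by
  simp [linearForm_apply, smul_eq_C_mul]

lemma linearForm_injective : Function.Injective (linearForm : (σ → R) → MvPolynomial σ R) :=
  fun b b' h => funext fun i => by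
    rw [← eval_single_linearForm i b, h, eval_single_linearForm]

lemma linearForm_eq_sumSMulX (b : σ → R) :
    linearForm b = sumSMulX (Finsupp.equivFunOnFinite.symm b) :=
  (Finsupp.linearCombination_eq_fintype_linearCombination_apply R X b).symm

lemma prime_linearForm {b : σ → F} (hb : b ≠ 0) : Prime (linearForm b) := by
  obtain ⟨i, hi⟩ := Function.ne_iff.1 hb
  rw [← irreducible_iff_prime, linearForm_eq_sumSMulX]
  refine irreducible_sumSMulX _ ⟨i, by simpa using hi⟩ fun r hr => ?_
  exact (ne_zero_of_dvd_ne_zero hi (hr i)).isUnit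

lemma associated_linearForm_iff_span_eq [IsDomain R] {b v : σ → R} :
    Associated (linearForm b) (linearForm v) ↔ Submodule.span R {b} = Submodule.span R {v} := by
  rw [Submodule.span_singleton_eq_span_singleton]
  constructor
  · rintro ⟨u, hu⟩
    obtain ⟨_, ⟨z, rfl⟩, hz⟩ := isUnit_iff_eq_C_of_isReduced.1 u.isUnit
    refine ⟨z, linearForm_injective ?_⟩
    rw [← hu, hz, mul_comm, ← smul_eq_C_mul, Units.smul_def, map_smul]
  · rintro ⟨z, rfl⟩
    refine ⟨Units.map C.toMonoidHom z, ?_⟩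
    rw [Units.smul_def, map_smul, smul_eq_C_mul, mul_comm]
    rfl

lemma sum_filter_associated_linearForm {ι : Type*} [Fintype ι] {b : ι → σ → F} {c : ι → ℤ}
    (hc : ∀ j, c j ≠ 0 → b j ≠ 0) {v : σ → F} (hv : v ≠ 0) :
    ∑ j with Associated (linearForm (b j)) (linearForm v), c j =
      ∑ j with b j ∈ Submodule.span F {v}, c j := by
  rw [Finset.sum_filter, Finset.sum_filter]
  refine Finset.sum_congr rfl fun j _ => ?_
  by_cases hj : c j = 0
  · rw [hj, ite_self, ite_self]
  · refine if_congr ?_ rfl rfl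
    rw [associated_linearForm_iff_span_eq]
    refine ⟨fun h => h ▸ Submodule.mem_span_singleton_self (b j), fun h => ?_⟩
    exact (eq_span_singleton_of_mem_of_finrank_eq_one (finrank_span_singleton hv) h (hc j hj)).symm

lemma associated_prod_linearForm_pow_toNat_iff {ι : Type*} [Fintype ι] {b : ι → σ → F}
    {c : ι → ℤ} (hc : ∀ j, c j ≠ 0 → b j ≠ 0) :
    Associated (∏ j, linearForm (b j) ^ (c j).toNat) (∏ j, linearForm (b j) ^ (-c j).toNat) ↔
      ∀ L : Submodule F (σ → F), Module.finrank F L = 1 → ∑ j with b j ∈ L, c j = 0 := by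
  rw [associated_prod_prime_pow_toNat_iff fun j hj => prime_linearForm (hc j hj)]
  constructor
  · intro h L hL
    obtain ⟨v, hvL, hv⟩ := L.ne_bot_iff.1 (Submodule.one_le_finrank_iff.1 hL.ge)
    rw [eq_span_singleton_of_mem_of_finrank_eq_one hL hvL hv,
      ← sum_filter_associated_linearForm hc hv, h]
  · intro h a
    by_contra hsum
    obtain ⟨k, hk, hck⟩ := Finset.exists_ne_zero_of_sum_ne_zero hsum
    have hka : Associated (linearForm (b k)) a := (Finset.mem_filter.1 hk).2
    have associated_iff (j : ι) :
        Associated (linearForm (b j)) a ↔ Associated (linearForm (b j)) (linearForm (b k)) :=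
      ⟨fun hja => hja.trans hka.symm, fun hjk => hjk.trans hka⟩
    refine hsum ?_
    simp only [associated_iff, sum_filter_associated_linearForm hc (hc k hck)]
    exact h _ (finrank_span_singleton (hc k hck))

end LinearForms

section ColumnCriterion

variable {ι σ : Type*} [Fintype ι] [Fintype σ] (B : Matrix ι σ ℤ) (i : σ)

lemma forall_prod_pow_toNat_eq_iff_linearForm (K : Type*) [CommRing K] [CharZero K] :
    (∀ s : σ → K, ∏ j, (∑ t, s t * (B j t : K)) ^ (B j i).toNat =
        ∏ j, (∑ t, s t * (B j t : K)) ^ (-B j i).toNat) ↔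
      ∏ j, linearForm (fun t => (B j t : ℚ)) ^ (B j i).toNat =
        ∏ j, linearForm (fun t => (B j t : ℚ)) ^ (-B j i).toNat := by
  calc
    _ ↔ ∏ j, linearForm (B j) ^ (B j i).toNat = ∏ j, linearForm (B j) ^ (-B j i).toNat := by
      simp only [← forall_aeval_eq_iff (K := K), map_prod, map_pow, aeval_linearForm,
        algebraMap_int_eq, eq_intCast]
    _ ↔ _ := by
      simp only [← (map_injective (σ := σ) _ (Int.castRingHom ℚ).injective_int).eq_iff, map_prod,
        map_pow, map_linearForm, eq_intCast]

lemma prod_linearForm_pow_toNat_eq_iff :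
    ∏ j, linearForm (fun t => (B j t : ℚ)) ^ (B j i).toNat =
        ∏ j, linearForm (fun t => (B j t : ℚ)) ^ (-B j i).toNat ↔
      (∀ L : Submodule ℚ (σ → ℚ), Module.finrank ℚ L = 1 →
        ∑ j with (fun t => (B j t : ℚ)) ∈ L, B j i = 0) ∧
      ∏ j, B j i ^ (B j i).toNat = ∏ j, B j i ^ (-B j i).toNat := by
  have eval_prod (e : ι → ℕ) :
      eval (Pi.single i 1) (∏ j, linearForm (fun t => (B j t : ℚ)) ^ e j) =
        ((∏ j, B j i ^ e j : ℤ) : ℚ) := by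
    simp only [map_prod, map_pow, eval_single_linearForm, Int.cast_prod, Int.cast_pow]
  have eval_ne_zero :
      eval (Pi.single i 1) (∏ j, linearForm (fun t => (B j t : ℚ)) ^ (B j i).toNat) ≠ 0 := by
    rw [eval_prod, Int.cast_ne_zero, Finset.prod_ne_zero_iff]
    intro j _
    by_cases hj : B j i = 0
    · simp [hj]
    · exact pow_ne_zero _ hj
  rw [eq_iff_associated_and_eval_eq eval_ne_zero, eval_prod, eval_prod, Int.cast_inj,
    associated_prod_linearForm_pow_toNat_iff]
  exact fun j hj hzero => hj (Int.cast_eq_zero.1 (congrFun hzero i))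

end ColumnCriterion

lemma sum_filter_row_mem_eq_zero_iff {ι σ : Type*} [Fintype ι] (B : Matrix ι σ ℤ)
    (L : Submodule ℚ (σ → ℚ)) :
    ∑ j with (fun t => (B j t : ℚ)) ∈ L, (fun t => (B j t : ℚ)) = 0 ↔
      ∀ i, ∑ j with (fun t => (B j t : ℚ)) ∈ L, B j i = 0 := by
  rw [funext_iff]
  refine forall_congr' fun i => ?_
  rw [Finset.sum_apply, Pi.zero_apply]
  norm_cast

theorem stmt14_general (K : Type*) [CommRing K] [CharZero K] {ι σ : Type*} [Fintype ι]
    [Fintype σ] (B : Matrix ι σ ℤ) :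
    (∀ (i : σ) (s : σ → K),
        ∏ j with 0 < B j i, (∑ t, s t * (B j t : K)) ^ (B j i).toNat =
          ∏ j with B j i < 0, (∑ t, s t * (B j t : K)) ^ (-(B j i)).toNat) ↔
    ((∀ L : Submodule ℚ (σ → ℚ), Module.finrank ℚ L = 1 →
        ∑ j with (fun t => (B j t : ℚ)) ∈ L, (fun t => (B j t : ℚ)) = 0) ∧
      ∀ i : σ, ∏ j with 0 < B j i, (B j i) ^ (B j i).toNat =
          ∏ j with B j i < 0, (B j i) ^ (-(B j i)).toNat) := by
  simp only [prod_filter_pos_pow_toNat (B · _), prod_filter_neg_pow_toNat_neg (B · _),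
    forall_prod_pow_toNat_eq_iff_linearForm, prod_linearForm_pow_toNat_eq_iff,
    sum_filter_row_mem_eq_zero_iff, forall_and]
  exact and_congr_left fun _ => ⟨fun h L hL i => h i L hL, fun h i L hL => h L hL i⟩

/-- Theorem 6.3: for an integer matrix `B` with nonzero rows `b_j`, the
polynomial identities `∏_{b_{ji}>0} ⟨s,b_j⟩^{b_{ji}} = ∏_{b_{ji}<0} ⟨s,b_j⟩^{-b_{ji}}`
(for all `s` in an algebraically closed field `K` of characteristic 0) hold iff the
line-sum criterion (a) and the integer product condition (b) hold. -/
theorem stmt14 (K : Type) [Field K] [IsAlgClosed K] [CharZero K]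
    (n m : ℕ) (B : Matrix (Fin n) (Fin m) ℤ)
    (hrows : ∀ j : Fin n, B j ≠ 0) :
    (∀ (i : Fin m) (s : Fin m → K),
        ∏ j ∈ Finset.univ.filter (fun j : Fin n => 0 < B j i),
            (∑ t, s t * (B j t : K)) ^ (B j i).toNat =
          ∏ j ∈ Finset.univ.filter (fun j : Fin n => B j i < 0),
            (∑ t, s t * (B j t : K)) ^ (-(B j i)).toNat) ↔
    ((∀ L : Submodule ℚ (Fin m → ℚ), Module.finrank ℚ L = 1 →
        ∑ j ∈ Finset.univ.filter (fun j : Fin n => (fun t => (B j t : ℚ)) ∈ L),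
          (fun t => (B j t : ℚ)) = (0 : Fin m → ℚ)) ∧
      ∀ i : Fin m,
        ∏ j ∈ Finset.univ.filter (fun j : Fin n => 0 < B j i), (B j i) ^ (B j i).toNat =
          ∏ j ∈ Finset.univ.filter (fun j : Fin n => B j i < 0),
            (B j i) ^ (-(B j i)).toNat) :=
  stmt14_general K B
end

section
/- Let M = (m_{jk}) ∈ ℤ^{d×n} be an integer matrix whose columns span ℤ^d. Then every v ∈ ker_ℤ(M) satisfies Σ_{k=1}^n v_k ≡ 0 (mod 2) if and only if there exists a subset I ⊆ {1, …, d} of the rows of M such that Σ_{j∈I} m_{jk} is odd for every k = 1, …, n. (This is the combinatorial core of Theorem 6.5: for a non pyramidal Lawrence configuration built from M, the associated toric variety is strongly self-dual exactly under this condition.) -/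
/-!
Since `M` maps onto `ℤ^d`, a homomorphism on `ℤ^n` that vanishes on `ker M` factors through `M`.
Apply this to the coordinate sum modulo 2: it vanishes on `ker M` exactly when there is a
homomorphism `ℤ^d → ℤ/2` sending every column of `M` to `1`. Such a homomorphism is given by its
values on the standard basis, that is, by the subset of rows where the value is `1`.
-/

section Factorization

variable {R V W N : Type*} [Ring R] [AddCommGroup V] [AddCommGroup W] [AddCommGroup N]
  [Module R V] [Module R W] [Module R N]

theorem ker_le_ker_iff_exists_comp_eq {f : V →ₗ[R] W} (hf : Function.Surjective f)
    {g : V →ₗ[R] N} : f.ker ≤ g.ker ↔ ∃ φ : W →ₗ[R] N, φ ∘ₗ f = g := by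
  constructor
  · intro hker
    refine ⟨f.ker.liftQ g hker ∘ₗ (f.quotKerEquivOfSurjective hf).symm, LinearMap.ext fun v => ?_⟩
    have hv : (f.quotKerEquivOfSurjective hf).symm (f v) = f.ker.mkQ v :=
      (LinearEquiv.symm_apply_eq _).mpr rfl
    simp [hv]
  · rintro ⟨φ, rfl⟩
    exact f.ker_le_ker_comp φ

end Factorization

section Matrix

variable {R m n N : Type*} [Fintype m] [Fintype n]

theorem linearCombination_surjective [Semiring R] [AddCommMonoid N] [Module R N] :
    Function.Surjective (Fintype.linearCombination R : (m → N) → (m → R) →ₗ[R] N) := by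
  classical
  exact fun φ => ⟨fun j => φ (Pi.single j 1), by
    ext; simp [Fintype.linearCombination_apply_single]⟩

theorem linearCombination_comp_mulVecLin_eq_iff [CommSemiring R] [AddCommMonoid N] [Module R N]
    (M : Matrix m n R) (c : m → N) (a : n → N) :
    Fintype.linearCombination R c ∘ₗ M.mulVecLin = Fintype.linearCombination R a ↔
      ∀ k, ∑ j, M j k • c j = a k := by
  classical
  simp [LinearMap.pi_ext'_iff, LinearMap.ext_ring_iff, Fintype.linearCombination_apply]

theorem forall_mulVec_eq_zero_sum_smul_eq_zero_iff [CommRing R] [AddCommGroup N] [Module R N]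
    {M : Matrix m n R} (hM : Submodule.span R (Set.range M.col) = ⊤) (a : n → N) :
    (∀ v : n → R, M.mulVec v = 0 → ∑ k, v k • a k = 0) ↔
      ∃ c : m → N, ∀ k, ∑ j, M j k • c j = a k := by
  have hsurj : Function.Surjective M.mulVecLin := by
    rw [← LinearMap.range_eq_top, M.range_mulVecLin, hM]
  calc (∀ v : n → R, M.mulVec v = 0 → ∑ k, v k • a k = 0)
    _ ↔ M.mulVecLin.ker ≤ (Fintype.linearCombination R a).ker := Iff.rfl
    _ ↔ ∃ φ, φ ∘ₗ M.mulVecLin = Fintype.linearCombination R a :=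
      ker_le_ker_iff_exists_comp_eq hsurj
    _ ↔ ∃ c : m → N, Fintype.linearCombination R c ∘ₗ M.mulVecLin =
          Fintype.linearCombination R a := linearCombination_surjective.exists
    _ ↔ ∃ c : m → N, ∀ k, ∑ j, M j k • c j = a k := by
      simp only [linearCombination_comp_mulVecLin_eq_iff]

end Matrix

section Indicator

variable {ι : Type*}

theorem indicator_one_zmod_two_surjective [Finite ι] :
    Function.Surjective fun I : Finset ι => (I : Set ι).indicator (1 : ι → ZMod 2) := by
  intro c
  refine ⟨(Set.toFinite {j | c j = 1}).toFinset, funext fun j => ?_⟩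
  have hcj : c j = 0 ∨ c j = 1 := by generalize c j = x; decide +revert
  rcases hcj with h | h <;> simp [h]

theorem sum_zsmul_indicator_one [Fintype ι] {S : Type*} [AddCommGroupWithOne S]
    (a : ι → ℤ) (I : Finset ι) :
    ∑ j, a j • (I : Set ι).indicator (1 : ι → S) j = ((∑ j ∈ I, a j : ℤ) : S) := by
  classical
  simp [Set.indicator_apply]

end Indicator

/-- core of Theorem 6.5: for `M ∈ ℤ^{d×n}` with columns spanning `ℤ^d`,
every integer relation of `M` has even coordinate sum iff some subset `I` of the rows of
`M` has odd column sums `Σ_{j∈I} m_{jk}` for every `k`. -/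
theorem stmt15 (d n : ℕ) (M : Matrix (Fin d) (Fin n) ℤ)
    (hspan : Submodule.span ℤ (Set.range fun k : Fin n => fun r : Fin d => M r k) =
      (⊤ : Submodule ℤ (Fin d → ℤ))) :
    (∀ v : Fin n → ℤ, M.mulVec v = 0 → 2 ∣ ∑ k, v k) ↔
      ∃ I : Finset (Fin d), ∀ k : Fin n, Odd (∑ j ∈ I, M j k) := by
  have two_dvd_sum_iff (v : Fin n → ℤ) : 2 ∣ ∑ k, v k ↔ ∑ k, v k • (1 : ZMod 2) = 0 := by
    rw [← Finset.sum_smul, zsmul_one, ZMod.intCast_eq_zero_iff_even, even_iff_two_dvd]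
  calc (∀ v : Fin n → ℤ, M.mulVec v = 0 → 2 ∣ ∑ k, v k)
    _ ↔ ∀ v : Fin n → ℤ, M.mulVec v = 0 → ∑ k, v k • (1 : ZMod 2) = 0 := by
      simp only [two_dvd_sum_iff]
    _ ↔ ∃ c : Fin d → ZMod 2, ∀ k, ∑ j, M j k • c j = 1 :=
      forall_mulVec_eq_zero_sum_smul_eq_zero_iff hspan 1
    _ ↔ ∃ I : Finset (Fin d), ∀ k, ∑ j, M j k • (I : Set (Fin d)).indicator 1 j = (1 : ZMod 2) :=
      indicator_one_zmod_two_surjective.exists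
    _ ↔ ∃ I : Finset (Fin d), ∀ k, Odd (∑ j ∈ I, M j k) := by
      simp only [sum_zsmul_indicator_one, ZMod.intCast_eq_one_iff_odd]
end
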